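/- Let u : ℝ → ℝ be bounded and continuous, let Ω, α ∈ ℝ, and suppose there exists δ > 0 such that Ω + α u(t) ≥ δ for all t ∈ ℝ. Define η(t) = Ω t + α ∫_0^t u(s) ds and let T > 0 be such that η(T) = 2π. Then the family of functions {t ↦ exp(i n η(t)) : n ∈ ℤ}, regarded as elements of the complex Lebesgue space L²((0,T); ℂ), is complete, i.e., the closure of its linear span is all of L²((0,T); ℂ). -/

import Mathlib

open MeasureTheory intervalIntegral Real

/-!
The phase `η` is a primitive of `Ω + α u > 0`, so it is strictly increasing and maps `(0, T)`
injectively into a fundamental domain of the circle `ℝ / 2πℤ`, and `exp (i n η)` is the pullback of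
the Fourier monomial of degree `n`. For *every* finite measure on the circle, the trigonometric
polynomials are dense in `L^p`: they are uniformly dense in the continuous functions. Taking the
push-forward of Lebesgue measure under `η`, it remains to see that the isometry `G ↦ G ∘ η` into
`L^p((0, T))` is onto, which holds because an injective measurable map between standard Borel
spaces is a measurable embedding (Lusin–Souslin).
-/

open scoped ENNReal

section Pullback

variable {X Y E : Type*} [MeasurableSpace X] [StandardBorelSpace X] [MeasurableSpace Y]
  [MeasurableSpace.CountablySeparated Y] {q : X → Y} {s : Set X}

theorem exists_stronglyMeasurable_eqOn_comp_of_injOn [TopologicalSpace E] [Nonempty E]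
    (hq : Measurable q) (hs : MeasurableSet s) (hinj : Set.InjOn q s) {f : X → E}
    (hf : StronglyMeasurable f) :
    ∃ g : Y → E, StronglyMeasurable g ∧ Set.EqOn (g ∘ q) f s := by
  have : StandardBorelSpace s := hs.standardBorel
  have hemb : MeasurableEmbedding fun x : s ↦ q x :=
    (hq.comp measurable_subtype_coe).measurableEmbedding hinj.injective
  obtain ⟨g, hg, hgq⟩ := hemb.exists_stronglyMeasurable_extend
    (hf.comp_measurable measurable_subtype_coe) fun _ ↦ inferInstance
  exact ⟨g, hg, fun x hx ↦ congrFun hgq ⟨x, hx⟩⟩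

theorem Lp_compMeasurePreserving_surjective_of_injOn [NormedAddCommGroup E] {p : ℝ≥0∞}
    {μ : Measure X} {ν : Measure Y} (hq : MeasurePreserving q μ ν) (hs : MeasurableSet s)
    (hμs : ∀ᵐ x ∂μ, x ∈ s) (hinj : Set.InjOn q s) :
    Function.Surjective (Lp.compMeasurePreserving (E := E) (p := p) q hq) := by
  intro F
  obtain ⟨g, hg, hgq⟩ :=
    exists_stronglyMeasurable_eqOn_comp_of_injOn hq.measurable hs hinj (Lp.stronglyMeasurable F)
  have hgF : g ∘ q =ᵐ[μ] F := hμs.mono hgq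
  have hgLp : MemLp g p ν := by
    rw [← hq.map_eq, memLp_map_measure_iff hg.aestronglyMeasurable hq.aemeasurable]
    exact (memLp_congr_ae hgF).2 (Lp.memLp F)
  refine ⟨hgLp.toLp g, Lp.ext ?_⟩
  rw [Lp.toLp_compMeasurePreserving]
  exact (MemLp.coeFn_toLp _).trans hgF

end Pullback

section Circle

variable {P : ℝ} [Fact (0 < P)]

theorem fourier_two_pi_coe_apply (n : ℤ) (x : ℝ) :
    fourier n (x : AddCircle (2 * π)) = Complex.exp (Complex.I * n * x) := by
  have hπ : (π : ℂ) ≠ 0 := Complex.ofReal_ne_zero.2 pi_ne_zero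
  rw [fourier_coe_apply]
  congr 1
  push_cast
  field_simp

theorem injOn_coe_addCircle_comp {ι : Type*} {s : Set ι} {f : ι → ℝ} {c : ℝ}
    (hinj : Set.InjOn f s) (hmaps : Set.MapsTo f s (Set.Ioc c (c + P))) :
    Set.InjOn (fun x ↦ (f x : AddCircle P)) s := fun _ hx _ hy hxy ↦
  hinj hx hy ((AddCircle.coe_eq_coe_iff_of_mem_Ioc (hmaps hx) (hmaps hy)).1 hxy)

variable {p : ℝ≥0∞} [Fact (1 ≤ p)]

theorem span_toLp_fourier_topologicalClosure_eq_top (hp : p ≠ ∞) (ν : Measure (AddCircle P))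
    [IsFiniteMeasure ν] :
    (Submodule.span ℂ (Set.range fun n : ℤ ↦
      ContinuousMap.toLp p ν ℂ (fourier (T := P) n))).topologicalClosure = ⊤ := by
  have hdense := (ContinuousMap.toLp_denseRange ℂ ν ℂ hp).topologicalClosure_map_submodule
    (span_fourier_closure_eq_top (T := P))
  rwa [Submodule.map_span, ← Set.range_comp] at hdense

variable {X : Type*} [MeasurableSpace X] [StandardBorelSpace X] {μ : Measure X} [IsFiniteMeasure μ]
  {s : Set X}

theorem span_fourier_comp_topologicalClosure_eq_top (hp : p ≠ ∞) {q : X → AddCircle P}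
    (hq : Measurable q) (hs : MeasurableSet s) (hμs : ∀ᵐ x ∂μ, x ∈ s) (hinj : Set.InjOn q s) :
    (Submodule.span ℂ {F : Lp ℂ p μ | ∃ n : ℤ, ∀ᵐ x ∂μ, F x = fourier n (q x)}).topologicalClosure
      = ⊤ := by
  have hqμ : MeasurePreserving q μ (μ.map q) := hq.measurePreserving μ
  let pullback : Lp ℂ p (μ.map q) →ₗᵢ[ℂ] Lp ℂ p μ := Lp.compMeasurePreservingₗᵢ ℂ q hqμ
  have hsurj : Function.Surjective pullback :=
    Lp_compMeasurePreserving_surjective_of_injOn hqμ hs hμs hinj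
  have hdense := DenseRange.topologicalClosure_map_submodule
    (f := pullback.toContinuousLinearMap) hsurj.denseRange
    (span_toLp_fourier_topologicalClosure_eq_top hp (μ.map q))
  rw [Submodule.map_span, ← Set.range_comp] at hdense
  refine top_unique (hdense.ge.trans (Submodule.topologicalClosure_mono (Submodule.span_mono ?_)))
  rintro _ ⟨n, rfl⟩
  have hpull := Lp.coeFn_compMeasurePreserving (ContinuousMap.toLp p (μ.map q) ℂ (fourier n)) hqμ
  have hfourier := hqμ.quasiMeasurePreserving.ae_eq_comp
    (ContinuousMap.coeFn_toLp (p := p) (𝕜 := ℂ) (μ.map q) (fourier n))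
  exact ⟨n, hpull.trans hfourier⟩

theorem span_exp_comp_topologicalClosure_eq_top (hp : p ≠ ∞) {f : X → ℝ} {c : ℝ}
    (hf : AEMeasurable f μ) (hμs : ∀ᵐ x ∂μ, x ∈ s) (hinj : Set.InjOn f s)
    (hmaps : Set.MapsTo f s (Set.Ioc c (c + 2 * π))) :
    (Submodule.span ℂ {F : Lp ℂ p μ | ∃ n : ℤ, ∀ᵐ x ∂μ,
      F x = Complex.exp (Complex.I * n * f x)}).topologicalClosure = ⊤ := by
  have : Fact (0 < 2 * π) := ⟨two_pi_pos⟩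
  obtain ⟨g, hg, hfg⟩ := hf
  obtain ⟨s', hs'μ, hs', hs'sub⟩ := (hμs.and hfg).exists_measurable_mem
  have heq : Set.EqOn f g s' := fun x hx ↦ (hs'sub x hx).2
  have hsub : s' ⊆ s := fun x hx ↦ (hs'sub x hx).1
  have hinj' : Set.InjOn (fun x ↦ (g x : AddCircle (2 * π))) s' :=
    injOn_coe_addCircle_comp ((hinj.mono hsub).congr heq) ((hmaps.mono_left hsub).congr heq)
  have hmeas : Measurable fun x ↦ (g x : AddCircle (2 * π)) := AddCircle.measurable_mk'.comp hg
  rw [← span_fourier_comp_topologicalClosure_eq_top hp hmeas hs' hs'μ hinj']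
  congr! 6 with F n
  refine Filter.eventually_congr (hfg.mono fun x hx ↦ ?_)
  rw [fourier_two_pi_coe_apply, hx]

end Circle

theorem strictMonoOn_intervalIntegral_of_ae_pos {f : ℝ → ℝ} {a b : ℝ}
    (hf : IntervalIntegrable f volume a b) (hpos : ∀ᵐ x ∂volume.restrict (Set.Ioo a b), 0 < f x) :
    StrictMonoOn (fun t ↦ ∫ x in a..t, f x) (Set.Icc a b) := by
  intro s hs t ht hst
  have hint {c d : ℝ} (hc : c ∈ Set.Icc a b) (hd : d ∈ Set.Icc a b) :
      IntervalIntegrable f volume c d :=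
    hf.mono_set (Set.uIcc_subset_uIcc (Set.Icc_subset_uIcc hc) (Set.Icc_subset_uIcc hd))
  have ha : a ∈ Set.Icc a b := Set.left_mem_Icc.2 (hs.1.trans hs.2)
  have hpos_st : ∀ᵐ x ∂volume.restrict (Set.Ioc s t), 0 < f x := by
    rw [← restrict_Ioo_eq_restrict_Ioc]
    exact ae_restrict_of_ae_restrict_of_subset (Set.Ioo_subset_Ioo hs.1 ht.2) hpos
  have hneBot : (ae (volume.restrict (Set.Ioc s t))).NeBot :=
    ae_restrict_neBot.2 (by simpa using hst)
  have hzero_lt : 0 < ∫ x in s..t, f x := by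
    simpa using integral_lt_integral_of_ae_le_of_measure_setOfPred_lt_ne_zero hst.le
      (intervalIntegrable_const (c := (0 : ℝ))) (hint hs ht) (hpos_st.mono fun _ ↦ le_of_lt)
      (frequently_ae_iff.1 hpos_st.frequently)
  rwa [← sub_pos, integral_interval_sub_left (hint ha ht) (hint ha hs)]

theorem strictMonoOn_mul_add_mul_intervalIntegral {u : ℝ → ℝ} {Ω α a b : ℝ}
    (hu : IntervalIntegrable u volume a b)
    (hpos : ∀ᵐ t ∂volume.restrict (Set.Ioo a b), 0 < Ω + α * u t) :
    StrictMonoOn (fun t ↦ Ω * t + α * ∫ s in a..t, u s) (Set.Icc a b) := by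
  have hmono := strictMonoOn_intervalIntegral_of_ae_pos
    (intervalIntegrable_const.add (hu.const_mul α)) hpos
  refine (hmono.add_const (Ω * a)).congr fun t ht ↦ ?_
  have hut : IntervalIntegrable u volume a t :=
    hu.mono_set (Set.uIcc_subset_uIcc_left (Set.Icc_subset_uIcc ht))
  simp only [integral_add intervalIntegrable_const (hut.const_mul α),
    intervalIntegral.integral_const, intervalIntegral.integral_const_mul, smul_eq_mul]
  ring

theorem kuramoto_exponentials_complete_general {p : ℝ≥0∞} [Fact (1 ≤ p)] (hp : p ≠ ∞)
    {u η : ℝ → ℝ} {Ω α T : ℝ} (hu : IntervalIntegrable u volume 0 T)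
    (hpos : ∀ᵐ t ∂volume.restrict (Set.Ioo 0 T), 0 < Ω + α * u t)
    (hη : ∀ t, η t = Ω * t + α * ∫ s in (0 : ℝ)..t, u s) (hηT : η T ≤ 2 * π) :
    (Submodule.span ℂ {F : Lp ℂ p (volume.restrict (Set.Ioo 0 T)) |
      ∃ n : ℤ, ∀ᵐ t ∂volume.restrict (Set.Ioo 0 T),
        F t = Complex.exp (Complex.I * n * η t)}).topologicalClosure = ⊤ := by
  have hη0 : η 0 = 0 := by simp [hη]
  have hmono : StrictMonoOn η (Set.Icc 0 T) :=
    (strictMonoOn_mul_add_mul_intervalIntegral hu hpos).congr fun t _ ↦ (hη t).symm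
  have hmono_Ioo : StrictMonoOn η (Set.Ioo 0 T) := hmono.mono Set.Ioo_subset_Icc_self
  have hmaps : Set.MapsTo η (Set.Ioo 0 T) (Set.Ioc 0 (0 + 2 * π)) :=
    hmono.mapsTo_Ioo.mono_right fun x hx ↦ ⟨hη0 ▸ hx.1, by linarith [hx.2]⟩
  exact span_exp_comp_topologicalClosure_eq_top hp
    (aemeasurable_restrict_of_monotoneOn measurableSet_Ioo hmono_Ioo.monotoneOn)
    (ae_restrict_mem measurableSet_Ioo) hmono_Ioo.injOn hmaps

/-- Completeness of the family `t ↦ exp (i n (Ω t + α ∫_0^t u))`, `n ∈ ℤ`, in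
`L²((0,T); ℂ)`, where `T > 0` is such that `Ω T + α ∫_0^T u = 2π`, under the
assumption that `u` is bounded continuous and `Ω + α u(t) ≥ δ > 0`. -/
theorem kuramoto_exponentials_complete
    (u : ℝ → ℝ) (hu_cont : Continuous u) (hu_bdd : ∃ M : ℝ, ∀ t : ℝ, |u t| ≤ M)
    (Ω α : ℝ) (δ : ℝ) (hδ : 0 < δ) (hpos : ∀ t : ℝ, δ ≤ Ω + α * u t)
    (η : ℝ → ℝ) (hη : ∀ t : ℝ, η t = Ω * t + α * ∫ s in (0:ℝ)..t, u s)
    (T : ℝ) (hT : 0 < T) (hηT : η T = 2 * π) :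
    (Submodule.span ℂ
        {F : Lp ℂ 2 (volume.restrict (Set.Ioo (0:ℝ) T)) |
          ∃ n : ℤ, ∀ᵐ t ∂(volume.restrict (Set.Ioo (0:ℝ) T)),
            F t = Complex.exp (Complex.I * (n : ℂ) * (η t : ℂ))}).topologicalClosure
      = ⊤ := by
  exact kuramoto_exponentials_complete_general (by simp) (hu_cont.intervalIntegrable 0 T)
    (.of_forall fun t ↦ hδ.trans_le (hpos t)) hη hηT.le
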